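/- arXiv:1407.0286 — 5 statements merged into one kernel-verified Lean document; each statement's English description precedes it below -/
import Mathlib

section
/- Suppose the family {r_θ}_{θ>0} satisfies Assumption 1 and there is a finite set S ⊆ ℝⁿ × ℝᵐ such that P_θ ∩ S ≠ ∅ for every θ > 0. Then there exists θ₀ ≥ 0 such that P_θ ∩ S ⊆ P for all θ ≥ θ₀. -/
open Filter Topology

/-- The number of nonzero components of `x`, as a real number. -/
noncomputable def zeroNorm {n : ℕ} (x : Fin n → ℝ) : ℝ :=
  ((Finset.univ.filter fun i => x i ≠ 0).card : ℝ)

/-- The step function: `s(t) = 1` for `t ≠ 0`, `s(0) = 0`. -/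
noncomputable def stepFn (t : ℝ) : ℝ := if t = 0 then 0 else 1

/-- Convex subdifferential of a finite function `φ : ℝ → ℝ` at `t₀`. -/
def subdiffR (φ : ℝ → ℝ) (t₀ : ℝ) : Set ℝ :=
  {v | ∀ t, φ t ≥ φ t₀ + (t - t₀) * v}

/-- The "DC subdifferential" `∂r(t) = {u - v : u ∈ ∂φ(t), v ∈ ∂ψ(t)}`. -/
def rSubdiff (φ ψ : ℝ → ℝ) (t : ℝ) : Set ℝ :=
  {μ | ∃ u ∈ subdiffR φ t, ∃ v ∈ subdiffR ψ t, μ = u - v}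

/-- Assumption 1 on the family of approximations `r θ`, with DC decomposition
`r θ = φ θ - ψ θ`. -/
def Assumption1 (r φ ψ : ℝ → ℝ → ℝ) : Prop :=
  (∀ t, Tendsto (fun θ => r θ t) atTop (nhds (stepFn t))) ∧
  (∀ θ > (0 : ℝ), ∀ t, r θ (-t) = r θ t) ∧
  (∀ θ > (0 : ℝ), MonotoneOn (r θ) (Set.Ici 0)) ∧
  (∀ θ > (0 : ℝ), ConvexOn ℝ Set.univ (φ θ) ∧ ConvexOn ℝ Set.univ (ψ θ) ∧
    ∀ t, r θ t = φ θ t - ψ θ t) ∧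
  (∀ θ > (0 : ℝ), ∀ t : ℝ, ∀ μ ∈ rSubdiff (φ θ) (ψ θ) t, 0 ≤ t * μ) ∧
  (∀ a b : ℝ, a ≤ b → (0 : ℝ) ∉ Set.Icc a b → ∀ ε > (0 : ℝ), ∃ Θ : ℝ, ∀ θ ≥ Θ,
    ∀ t ∈ Set.Icc a b, ∀ z ∈ rSubdiff (φ θ) (ψ θ) t, |z| ≤ ε)

/-!
Minimality is preserved under pointwise limits of the objective: if `p` minimizes `F θ` on `K` for
arbitrarily large `θ`, then each inequality `F θ p ≤ F θ q` passes to the limit. Hence a point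
outside `P` belongs to `P_θ` only for bounded `θ`, and a finite `S` allows a common bound. The
penalties do converge pointwise, because `‖x‖₀` is the sum of the step functions of the coordinates.
-/

/-- The set of global minimizers of the problem "minimize `F` over `K`"; it covers both `P` and
`P_θ`. Feasibility is included because `IsMinOn F K p` alone does not force `p ∈ K`. -/
def minimizersOn {α β : Type*} [Preorder β] (F : α → β) (K : Set α) : Set α :=
  {p | p ∈ K ∧ IsMinOn F K p}

section PointwiseLimit

variable {Θ α β : Type*} [TopologicalSpace β] [Preorder β] [OrderClosedTopology β]
  {l : Filter Θ} {F : Θ → α → β} {G : α → β} {K S : Set α}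

theorem mem_minimizersOn_of_frequently_of_tendsto {p : α}
    (hp : ∃ᶠ θ in l, p ∈ minimizersOn (F θ) K)
    (hFG : ∀ q ∈ K, Tendsto (fun θ => F θ q) l (𝓝 (G q))) : p ∈ minimizersOn G K := by
  obtain ⟨_, hpK, _⟩ := hp.exists
  exact ⟨hpK, fun q hq => le_of_tendsto_of_tendsto_of_frequently (hFG p hpK) (hFG q hq)
    (hp.mono fun _ hθ => hθ.2 hq)⟩

theorem eventually_minimizersOn_inter_subset_of_tendsto (hS : S.Finite)
    (hFG : ∀ q ∈ K, Tendsto (fun θ => F θ q) l (𝓝 (G q))) :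
    ∀ᶠ θ in l, minimizersOn (F θ) K ∩ S ⊆ minimizersOn G K := by
  have eventually_forall_mem :
      ∀ᶠ θ in l, ∀ p ∈ S, p ∈ minimizersOn (F θ) K → p ∈ minimizersOn G K := by
    refine (eventually_all_finite hS).2 fun p _ => ?_
    by_cases hp : ∃ᶠ θ in l, p ∈ minimizersOn (F θ) K
    · exact .of_forall fun _ _ => mem_minimizersOn_of_frequently_of_tendsto hp hFG
    · exact (not_frequently.1 hp).mono fun _ hθ hmem => absurd hmem hθ
  exact eventually_forall_mem.mono fun θ hθ p hp => hθ p hp.2 hp.1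

end PointwiseLimit

theorem zeroNorm_eq_sum_stepFn {n : ℕ} (x : Fin n → ℝ) : zeroNorm x = ∑ i, stepFn (x i) := by
  simp only [zeroNorm, stepFn, Finset.natCast_card_filter, ite_not]

theorem tendsto_sum_zeroNorm {Θ : Type*} {l : Filter Θ} {r : Θ → ℝ → ℝ}
    (hr : ∀ t, Tendsto (fun θ => r θ t) l (𝓝 (stepFn t))) {n : ℕ} (x : Fin n → ℝ) :
    Tendsto (fun θ => ∑ i, r θ (x i)) l (𝓝 (zeroNorm x)) := by
  rw [zeroNorm_eq_sum_stepFn]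
  exact tendsto_finsetSum _ fun i _ => hr (x i)

theorem stmt_4_general {Θ Y : Type*} {l : Filter Θ} {n : ℕ} (K : Set ((Fin n → ℝ) × Y))
    (f : (Fin n → ℝ) × Y → ℝ) (lam : ℝ) {r : Θ → ℝ → ℝ}
    (hr : ∀ t, Tendsto (fun θ => r θ t) l (𝓝 (stepFn t)))
    {S : Set ((Fin n → ℝ) × Y)} (hS : S.Finite) :
    ∀ᶠ θ in l, minimizersOn (fun p => f p + lam * ∑ i, r θ (p.1 i)) K ∩ S ⊆
      minimizersOn (fun p => f p + lam * zeroNorm p.1) K :=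
  eventually_minimizersOn_inter_subset_of_tendsto hS fun p _ =>
    ((tendsto_sum_zeroNorm hr p.1).const_mul lam).const_add (f p)

/-- if a finite set `S` meets every solution set `P_θ`, then for `θ`
large enough, `P_θ ∩ S ⊆ P`. -/
theorem stmt_4 {n m : ℕ}
    (K : Set ((Fin n → ℝ) × (Fin m → ℝ))) (hK : Convex ℝ K)
    (g h : (Fin n → ℝ) × (Fin m → ℝ) → ℝ)
    (hg : ConvexOn ℝ Set.univ g) (hh : ConvexOn ℝ Set.univ h)
    (f : (Fin n → ℝ) × (Fin m → ℝ) → ℝ) (hf : ∀ p, f p = g p - h p)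
    (lam : ℝ) (hlam : 0 < lam)
    (r φ ψ : ℝ → ℝ → ℝ) (hA : Assumption1 r φ ψ)
    (P : Set ((Fin n → ℝ) × (Fin m → ℝ)))
    (hP : P = {p | p ∈ K ∧ ∀ q ∈ K,
      f p + lam * zeroNorm p.1 ≤ f q + lam * zeroNorm q.1})
    (Pθ : ℝ → Set ((Fin n → ℝ) × (Fin m → ℝ)))
    (hPθ : ∀ θ, Pθ θ = {p | p ∈ K ∧ ∀ q ∈ K,
      f p + lam * ∑ i, r θ (p.1 i) ≤ f q + lam * ∑ i, r θ (q.1 i)})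
    (S : Set ((Fin n → ℝ) × (Fin m → ℝ))) (hS : S.Finite)
    (hne : ∀ θ > (0 : ℝ), (Pθ θ ∩ S).Nonempty) :
    ∃ θ₀ ≥ (0 : ℝ), ∀ θ ≥ θ₀, Pθ θ ∩ S ⊆ P := by
  simp only [hP, hPθ]
  exact (atTop_basis' 0).eventually_iff.1 (stmt_4_general K f lam hA.1 hS)
end

section
/- A point (x*,y*) ∈ K is a local minimizer of the ℓ0-problem, i.e. of F(x,y) = f(x,y) + λ‖x‖₀ on K, if and only if (x*,y*) is a local minimizer of f on K(x*), where K(x*) = {(x,y) ∈ K : x_i = 0 for every index i with x*_i = 0}. -/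
/-!
Near `x*` no nonzero component can vanish, so the support can only grow. Where it stays the same
the penalty is constant and only `f` matters; where it grows the penalty jumps by at least `λ`,
while by lower semicontinuity `f` drops by less than `λ` close to the minimizer.
-/

open Filter Set Topology

section HammingNorm

variable {ι : Type*} {β : ι → Type*} [∀ i, Zero (β i)]

theorem hammingNorm_le_of_forall_eq_zero_imp [Fintype ι] [∀ i, DecidableEq (β i)]
    {x y : ∀ i, β i} (hxy : ∀ i, y i = 0 → x i = 0) : hammingNorm x ≤ hammingNorm y :=
  Finset.card_le_card <| Finset.monotone_filter_right _ fun i _ => mt (hxy i)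

theorem hammingNorm_lt_of_forall_eq_zero_imp [Fintype ι] [∀ i, DecidableEq (β i)]
    {x y : ∀ i, β i} (hxy : ∀ i, y i = 0 → x i = 0) {i : ι} (hxi : x i = 0) (hyi : y i ≠ 0) :
    hammingNorm x < hammingNorm y :=
  Finset.card_lt_card <|
    (Finset.ssubset_iff_of_subset <| Finset.monotone_filter_right _ fun j _ => mt (hxy j)).2
      ⟨i, by simpa using hyi, by simpa using hxi⟩

theorem eventually_forall_eq_zero_imp [Finite ι] [∀ i, TopologicalSpace (β i)]
    [∀ i, T1Space (β i)] (x : ∀ i, β i) : ∀ᶠ y in 𝓝 x, ∀ i, y i = 0 → x i = 0 := by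
  refine eventually_all.2 fun i => ?_
  by_cases hxi : x i = 0
  · exact Eventually.of_forall fun _ _ => hxi
  · filter_upwards [(continuous_apply i).continuousAt.eventually_ne hxi] with y hyi
    exact fun h => absurd h hyi

end HammingNorm

theorem zeroNorm_eq_hammingNorm {n : ℕ} (x : Fin n → ℝ) : zeroNorm x = hammingNorm x :=
  rfl

section LocalMin

variable {E ι : Type*} {β : ι → Type*} [∀ i, Zero (β i)]

/-- The feasible set `K(a)` of the support-restricted problem: the points of `K` at which every
component of `x` that vanishes at `a` vanishes too. Here `x` is a vector-valued function on the
space containing `K`, in place of the first projection of `ℝⁿ × ℝᵐ`. -/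
def supportRestriction (x : E → ∀ i, β i) (K : Set E) (a : E) : Set E :=
  {q ∈ K | ∀ i, x a i = 0 → x q i = 0}

variable [TopologicalSpace E] [Fintype ι] [∀ i, DecidableEq (β i)]
  {x : E → ∀ i, β i} {K : Set E} {a : E} {f : E → ℝ} {lam : ℝ}

theorem isLocalMinOn_supportRestriction (hlam : 0 ≤ lam)
    (hmin : IsLocalMinOn (fun q => f q + lam * hammingNorm (x q)) K a) :
    IsLocalMinOn f (supportRestriction x K a) a := by
  filter_upwards [hmin.on_subset (sep_subset _ _), self_mem_nhdsWithin] with q hq hqa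
  have hnorm : (hammingNorm (x q) : ℝ) ≤ hammingNorm (x a) :=
    mod_cast hammingNorm_le_of_forall_eq_zero_imp hqa.2
  linarith [mul_le_mul_of_nonneg_left hnorm hlam]

theorem isLocalMinOn_add_mul_hammingNorm [∀ i, TopologicalSpace (β i)] [∀ i, T1Space (β i)]
    (hlam : 0 < lam) (hx : ContinuousWithinAt x K a) (hf : LowerSemicontinuousWithinAt f K a)
    (hmin : IsLocalMinOn f (supportRestriction x K a) a) :
    IsLocalMinOn (fun q => f q + lam * hammingNorm (x q)) K a := by
  have hmin' : ∀ᶠ q in 𝓝[K] a, q ∈ supportRestriction x K a → f a ≤ f q :=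
    (eventually_nhdsWithin_iff.1 hmin).filter_mono nhdsWithin_le_nhds
  have hdrop : ∀ᶠ q in 𝓝[K] a, f a - lam < f q := hf _ (sub_lt_self _ hlam)
  have hsupp : ∀ᶠ q in 𝓝[K] a, ∀ i, x q i = 0 → x a i = 0 :=
    hx.eventually (eventually_forall_eq_zero_imp (x a))
  filter_upwards [hmin', hdrop, hsupp, self_mem_nhdsWithin] with q hqmin hqdrop hqsupp hqK
  by_cases hq : ∀ i, x a i = 0 → x q i = 0
  · have hnorm : (hammingNorm (x a) : ℝ) ≤ hammingNorm (x q) :=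
      mod_cast hammingNorm_le_of_forall_eq_zero_imp hqsupp
    exact add_le_add (hqmin ⟨hqK, hq⟩) (mul_le_mul_of_nonneg_left hnorm hlam.le)
  · push Not at hq
    obtain ⟨i, hai, hqi⟩ := hq
    have hjump : (hammingNorm (x a) : ℝ) + 1 ≤ hammingNorm (x q) :=
      mod_cast hammingNorm_lt_of_forall_eq_zero_imp hqsupp hai hqi
    linarith [mul_le_mul_of_nonneg_left hjump hlam.le]

theorem stmt_6_general [∀ i, TopologicalSpace (β i)] [∀ i, T1Space (β i)]
    (hlam : 0 < lam) (hx : ContinuousWithinAt x K a) (hf : LowerSemicontinuousWithinAt f K a) :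
    IsLocalMinOn (fun q => f q + lam * hammingNorm (x q)) K a ↔
      IsLocalMinOn f (supportRestriction x K a) a :=
  ⟨isLocalMinOn_supportRestriction hlam.le, isLocalMinOn_add_mul_hammingNorm hlam hx hf⟩

end LocalMin

theorem isLocalMinOn_iff_exists_norm_sub_lt {E α : Type*} [SeminormedAddCommGroup E] [Preorder α]
    {φ : E → α} {s : Set E} {a : E} :
    IsLocalMinOn φ s a ↔ ∃ δ > (0 : ℝ), ∀ q ∈ s, ‖q - a‖ < δ → φ a ≤ φ q := by
  simp only [IsLocalMinOn, IsMinFilter, eventually_nhdsWithin_iff, Metric.eventually_nhds_iff,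
    dist_eq_norm]
  exact exists_congr fun δ => and_congr_right fun _ => forall_congr' fun q => forall_comm

theorem continuous_sub_of_convexOn {E : Type*} [NormedAddCommGroup E] [NormedSpace ℝ E]
    [FiniteDimensional ℝ E] {g h : E → ℝ} (hg : ConvexOn ℝ univ g) (hh : ConvexOn ℝ univ h) :
    Continuous (g - h) :=
  hg.locallyLipschitz.continuous.sub hh.locallyLipschitz.continuous

/-- `(x*,y*)` is a local minimizer of the ℓ0-problem on `K` iff it is a
local minimizer of `f` on `K(x*) = {(x,y) ∈ K : x_i = 0 whenever x*_i = 0}`. -/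
theorem stmt_6 {n m : ℕ}
    (K : Set ((Fin n → ℝ) × (Fin m → ℝ))) (hK : Convex ℝ K)
    (g h : (Fin n → ℝ) × (Fin m → ℝ) → ℝ)
    (hg : ConvexOn ℝ Set.univ g) (hh : ConvexOn ℝ Set.univ h)
    (f : (Fin n → ℝ) × (Fin m → ℝ) → ℝ) (hf : ∀ p, f p = g p - h p)
    (lam : ℝ) (hlam : 0 < lam)
    (pstar : (Fin n → ℝ) × (Fin m → ℝ)) (hpstar : pstar ∈ K) :
    (∃ δ > (0 : ℝ), ∀ q ∈ K, ‖q - pstar‖ < δ →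
      f pstar + lam * zeroNorm pstar.1 ≤ f q + lam * zeroNorm q.1) ↔
    (∃ δ > (0 : ℝ), ∀ q ∈ K, (∀ i, pstar.1 i = 0 → q.1 i = 0) →
      ‖q - pstar‖ < δ → f pstar ≤ f q) := by
  have hfc : Continuous f := funext hf ▸ continuous_sub_of_convexOn hg hh
  simpa only [zeroNorm_eq_hammingNorm, isLocalMinOn_iff_exists_norm_sub_lt, supportRestriction,
    mem_sep_iff, and_imp] using
    stmt_6_general hlam continuous_fst.continuousWithinAt
      hfc.continuousWithinAt.lowerSemicontinuousWithinAt
end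

section
/- Suppose the family {r_θ}_{θ>0} satisfies Assumption 1 and there is a finite set S ⊆ ℝⁿ × ℝᵐ such that L_θ ∩ S ≠ ∅ for every θ > 0. Then there exists θ₀ ≥ 0 such that L_θ ∩ S ⊆ L for all θ ≥ θ₀. -/
open Filter Topology

/-- Canonical inner product on `ℝⁿ × ℝᵐ`. -/
def dotE {n m : ℕ} (u v : (Fin n → ℝ) × (Fin m → ℝ)) : ℝ :=
  (∑ i, u.1 i * v.1 i) + (∑ j, u.2 j * v.2 j)

/-- Convex subdifferential of a finite function on `ℝⁿ × ℝᵐ`. -/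
def subdiffE {n m : ℕ} (φ : (Fin n → ℝ) × (Fin m → ℝ) → ℝ)
    (p : (Fin n → ℝ) × (Fin m → ℝ)) : Set ((Fin n → ℝ) × (Fin m → ℝ)) :=
  {v | ∀ q, φ q ≥ φ p + dotE (q - p) v}

/-!
Critical points of the penalized problems persist in the limit: if `p` lies in `L_θ` for arbitrarily
large `θ`, then `p ∈ L`. The subgradients of `g` and `h` certifying `p ∈ L_θ` stay in the
compact sets `∂g(p)` and `∂h(p)`, so they converge along an ultrafilter. For `q ∈ K(p)` the penalty
term `∑ i, z i * (q i - p i)` only sees coordinates with `p i ≠ 0`, where `z i ∈ λ ∂r_θ(p i)` tends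
to `0`, so the variational inequality passes to the limit. A point of a finite set outside `L`
therefore leaves `L_θ` from some threshold on, and the largest threshold serves all of them.
-/

section Limits

variable {α ι : Type*} {l : Filter α}

theorem exists_mem_forall_nonneg_of_tendsto_zero [l.NeBot] {X M : Type*} [TopologicalSpace X]
    [TopologicalSpace M] [AddZeroClass M] [ContinuousAdd M] [Preorder M] [ClosedIciTopology M]
    {A : Set X} (hA : IsCompact A) {s : Set ι} {F : ι → X → M} (hF : ∀ i ∈ s, Continuous (F i))
    {x : α → X} (hx : ∀ᶠ a in l, x a ∈ A)
    {e : ι → α → M} (he : ∀ i ∈ s, Tendsto (e i) l (𝓝 0))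
    (hnonneg : ∀ i ∈ s, ∀ᶠ a in l, 0 ≤ F i (x a) + e i a) :
    ∃ y ∈ A, ∀ i ∈ s, 0 ≤ F i y := by
  let U : Ultrafilter α := Ultrafilter.of l
  have hU : ↑U ≤ l := Ultrafilter.of_le l
  obtain ⟨y, hyA, hxy⟩ : ∃ y ∈ A, Tendsto x U (𝓝 y) :=
    hA.ultrafilter_le_nhds' (U.map x) (hU hx)
  refine ⟨y, hyA, fun i hi => ?_⟩
  have hlim : Tendsto (fun a => F i (x a) + e i a) U (𝓝 (F i y)) := by
    simpa only [add_zero, Function.comp_apply] using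
      (((hF i hi).tendsto y).comp hxy).add ((he i hi).mono_left hU)
  exact ge_of_tendsto hlim (hU (hnonneg i hi))

theorem tendsto_sum_mul_zero {R : Type*} [NonUnitalNonAssocSemiring R] [TopologicalSpace R]
    [ContinuousAdd R] [ContinuousMul R] {s : Finset ι} {z : α → ι → R} {d : ι → R}
    (hz : ∀ i ∈ s, d i ≠ 0 → Tendsto (fun a => z a i) l (𝓝 0)) :
    Tendsto (fun a => ∑ i ∈ s, z a i * d i) l (𝓝 0) := by
  rw [← Finset.sum_const_zero (s := s)]
  refine tendsto_finsetSum s fun i hi => ?_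
  obtain hd | hd := eq_or_ne (d i) 0
  · simpa only [hd, mul_zero] using tendsto_const_nhds
  · simpa only [zero_mul] using (hz i hi hd).mul_const (d i)

end Limits

section Subdifferential

variable {n m : ℕ}

@[fun_prop]
theorem continuous_dotE : Continuous fun w : ((Fin n → ℝ) × (Fin m → ℝ)) ×
    ((Fin n → ℝ) × (Fin m → ℝ)) => dotE w.1 w.2 := by
  unfold dotE
  fun_prop

theorem dotE_neg_left (u v : (Fin n → ℝ) × (Fin m → ℝ)) : dotE (-u) v = -dotE u v := by
  simp only [dotE, Prod.fst_neg, Prod.snd_neg, Pi.neg_apply, neg_mul, Finset.sum_neg_distrib,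
    neg_add]

theorem dotE_single_fst (i : Fin n) (v : (Fin n → ℝ) × (Fin m → ℝ)) :
    dotE (Pi.single i 1, 0) v = v.1 i := by
  simp [dotE, Pi.single_apply]

theorem dotE_single_snd (j : Fin m) (v : (Fin n → ℝ) × (Fin m → ℝ)) :
    dotE (0, Pi.single j 1) v = v.2 j := by
  simp [dotE, Pi.single_apply]

variable {g : (Fin n → ℝ) × (Fin m → ℝ) → ℝ} {p v : (Fin n → ℝ) × (Fin m → ℝ)}

theorem dotE_le_of_mem_subdiffE (hv : v ∈ subdiffE g p) (d : (Fin n → ℝ) × (Fin m → ℝ)) :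
    dotE d v ≤ g (p + d) - g p := by
  have h := hv (p + d)
  rw [add_sub_cancel_left] at h
  linarith

theorem le_dotE_of_mem_subdiffE (hv : v ∈ subdiffE g p) (d : (Fin n → ℝ) × (Fin m → ℝ)) :
    g p - g (p - d) ≤ dotE d v := by
  have h := dotE_le_of_mem_subdiffE hv (-d)
  rw [dotE_neg_left, ← sub_eq_add_neg] at h
  linarith

variable (g p)

theorem isClosed_subdiffE : IsClosed (subdiffE g p) := by
  simp only [subdiffE, ge_iff_le, Set.ofPred_forall]
  exact isClosed_iInter fun q => isClosed_le (by fun_prop) continuous_const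

theorem subdiffE_subset_Icc :
    subdiffE g p ⊆ Set.Icc
      (fun i => g p - g (p - (Pi.single i 1, 0)), fun j => g p - g (p - (0, Pi.single j 1)))
      (fun i => g (p + (Pi.single i 1, 0)) - g p, fun j => g (p + (0, Pi.single j 1)) - g p) := by
  refine fun v hv => ⟨⟨fun i => ?_, fun j => ?_⟩, ⟨fun i => ?_, fun j => ?_⟩⟩
  · exact (le_dotE_of_mem_subdiffE hv _).trans_eq (dotE_single_fst i v)
  · exact (le_dotE_of_mem_subdiffE hv _).trans_eq (dotE_single_snd j v)
  · exact (dotE_single_fst i v).symm.trans_le (dotE_le_of_mem_subdiffE hv _)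
  · exact (dotE_single_snd j v).symm.trans_le (dotE_le_of_mem_subdiffE hv _)

theorem isCompact_subdiffE : IsCompact (subdiffE g p) :=
  isCompact_Icc.of_isClosed_subset (isClosed_subdiffE g p) (subdiffE_subset_Icc g p)

end Subdifferential

section CriticalPoints

variable {n m : ℕ}

/-- The set `L` of critical points of the limit problem: the variational inequality for
`∂g(p) - ∂h(p)` is required only on `K(p)`, the points of `K` whose first component vanishes
wherever that of `p` does. -/
def supportCriticalPoints (K : Set ((Fin n → ℝ) × (Fin m → ℝ)))
    (g h : (Fin n → ℝ) × (Fin m → ℝ) → ℝ) : Set ((Fin n → ℝ) × (Fin m → ℝ)) :=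
  {p | p ∈ K ∧ ∃ vg ∈ subdiffE g p, ∃ vh ∈ subdiffE h p,
    ∀ q ∈ K, (∀ i, p.1 i = 0 → q.1 i = 0) → 0 ≤ dotE (vg - vh) (q - p)}

/-- The set `L_θ` of critical points of the penalized problem, where `D t` plays the role of
`∂r_θ(t)` and may be any set of slopes. -/
def penalizedCriticalPoints (K : Set ((Fin n → ℝ) × (Fin m → ℝ)))
    (g h : (Fin n → ℝ) × (Fin m → ℝ) → ℝ) (lam : ℝ) (D : ℝ → Set ℝ) :
    Set ((Fin n → ℝ) × (Fin m → ℝ)) :=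
  {p | p ∈ K ∧ ∃ vg ∈ subdiffE g p, ∃ vh ∈ subdiffE h p, ∃ zbar : Fin n → ℝ,
    (∀ i, ∃ μ ∈ D (p.1 i), zbar i = lam * μ) ∧
    ∀ q ∈ K, 0 ≤ dotE (vg - vh) (q - p) + ∑ i, zbar i * (q.1 i - p.1 i)}

variable {α : Type*} {l : Filter α} {K : Set ((Fin n → ℝ) × (Fin m → ℝ))}
  {g h : (Fin n → ℝ) × (Fin m → ℝ) → ℝ} {lam : ℝ} {D : α → ℝ → Set ℝ}

theorem mem_supportCriticalPoints_of_eventually_mem [l.NeBot] {p : (Fin n → ℝ) × (Fin m → ℝ)}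
    (hD : ∀ t ≠ 0, Tendsto (fun θ => D θ t) l (𝓝 0).smallSets)
    (hp : ∀ᶠ θ in l, p ∈ penalizedCriticalPoints K g h lam (D θ)) :
    p ∈ supportCriticalPoints K g h := by
  obtain ⟨-, hpK, -⟩ := hp.exists
  have hcert : ∀ᶠ θ in l, ∃ c : (((Fin n → ℝ) × (Fin m → ℝ)) × ((Fin n → ℝ) × (Fin m → ℝ))) ×
      (Fin n → ℝ), c.1 ∈ subdiffE g p ×ˢ subdiffE h p ∧ (∀ i, c.2 i ∈ D θ (p.1 i)) ∧
        ∀ q ∈ K, 0 ≤ dotE (c.1.1 - c.1.2) (q - p) + ∑ i, lam * c.2 i * (q.1 i - p.1 i) := by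
    filter_upwards [hp] with θ ⟨_, vg, hvg, vh, hvh, z, hz, hq⟩
    choose μ hμ hzμ using hz
    exact ⟨((vg, vh), μ), ⟨hvg, hvh⟩, hμ, by simpa only [hzμ] using hq⟩
  obtain ⟨c, hc⟩ := hcert.choice
  have hpenalty : ∀ q ∈ {q ∈ K | ∀ i, p.1 i = 0 → q.1 i = 0},
      Tendsto (fun θ => ∑ i, lam * (c θ).2 i * (q.1 i - p.1 i)) l (𝓝 0) := by
    refine fun q hq => tendsto_sum_mul_zero fun i _ hne => ?_
    have hpi : p.1 i ≠ 0 := fun h0 => hne (by rw [hq.2 i h0, h0, sub_zero])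
    have hμ : Tendsto (fun θ => (c θ).2 i) l (𝓝 0) :=
      (hD _ hpi).of_smallSets (hc.mono fun θ hθ => hθ.2.1 i)
    simpa only [mul_zero] using hμ.const_mul lam
  obtain ⟨⟨vg, vh⟩, ⟨hvg, hvh⟩, hq⟩ := exists_mem_forall_nonneg_of_tendsto_zero
    ((isCompact_subdiffE g p).prod (isCompact_subdiffE h p))
    (F := fun q w => dotE (w.1 - w.2) (q - p)) (fun q _ => by fun_prop)
    (hc.mono fun θ hθ => hθ.1) hpenalty (fun q hq => hc.mono fun θ hθ => hθ.2.2 q hq.1)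
  exact ⟨hpK, vg, hvg, vh, hvh, fun q hqK hq0 => hq q ⟨hqK, hq0⟩⟩

theorem mem_supportCriticalPoints_of_frequently_mem {p : (Fin n → ℝ) × (Fin m → ℝ)}
    (hD : ∀ t ≠ 0, Tendsto (fun θ => D θ t) l (𝓝 0).smallSets)
    (hp : ∃ᶠ θ in l, p ∈ penalizedCriticalPoints K g h lam (D θ)) :
    p ∈ supportCriticalPoints K g h := by
  have : (l ⊓ 𝓟 {θ | p ∈ penalizedCriticalPoints K g h lam (D θ)}).NeBot :=
    frequently_mem_iff_neBot.1 hp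
  exact mem_supportCriticalPoints_of_eventually_mem (lam := lam)
    (fun t ht => (hD t ht).mono_left inf_le_left) (mem_inf_of_right (mem_principal_self _))

end CriticalPoints

theorem Assumption1.tendsto_rSubdiff_smallSets {r φ ψ : ℝ → ℝ → ℝ} (hA : Assumption1 r φ ψ)
    {t : ℝ} (ht : t ≠ 0) :
    Tendsto (fun θ => rSubdiff (φ θ) (ψ θ) t) atTop (𝓝 0).smallSets := by
  obtain ⟨-, -, -, -, -, hvanish⟩ := hA
  refine Metric.nhds_basis_closedBall.smallSets.tendsto_right_iff.2 fun ε hε => ?_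
  obtain ⟨Θ, hΘ⟩ := hvanish t t le_rfl (by simpa using ht.symm) ε hε
  filter_upwards [eventually_ge_atTop Θ] with θ hθ z hz
  simpa only [mem_closedBall_zero_iff, Real.norm_eq_abs] using
    hΘ θ hθ t (Set.left_mem_Icc.2 le_rfl) z hz

theorem stmt_10_general {n m : ℕ} {α : Type*} {l : Filter α}
    {K : Set ((Fin n → ℝ) × (Fin m → ℝ))} {g h : (Fin n → ℝ) × (Fin m → ℝ) → ℝ}
    {lam : ℝ} {D : α → ℝ → Set ℝ}
    (hD : ∀ t ≠ 0, Tendsto (fun θ => D θ t) l (𝓝 0).smallSets)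
    {S : Set ((Fin n → ℝ) × (Fin m → ℝ))} (hS : S.Finite) :
    ∀ᶠ θ in l, penalizedCriticalPoints K g h lam (D θ) ∩ S ⊆ supportCriticalPoints K g h := by
  have hpoint : ∀ p ∈ S, ∀ᶠ θ in l,
      p ∈ penalizedCriticalPoints K g h lam (D θ) → p ∈ supportCriticalPoints K g h :=
    fun p _ => eventually_imp_distrib_right.2 (mem_supportCriticalPoints_of_frequently_mem hD)
  filter_upwards [(eventually_all_finite hS).2 hpoint] with θ hθ p ⟨hp, hpS⟩
  exact hθ p hpS hp

/-- if a finite set `S` meets every `L_θ`, then for `θ` large enough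
`L_θ ∩ S ⊆ L`. -/
theorem stmt_10 {n m : ℕ}
    (K : Set ((Fin n → ℝ) × (Fin m → ℝ))) (hK : Convex ℝ K)
    (g h : (Fin n → ℝ) × (Fin m → ℝ) → ℝ)
    (hg : ConvexOn ℝ Set.univ g) (hh : ConvexOn ℝ Set.univ h)
    (f : (Fin n → ℝ) × (Fin m → ℝ) → ℝ) (hf : ∀ p, f p = g p - h p)
    (lam : ℝ) (hlam : 0 < lam)
    (r φ ψ : ℝ → ℝ → ℝ) (hA : Assumption1 r φ ψ)
    (L : Set ((Fin n → ℝ) × (Fin m → ℝ)))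
    (hL : L = {p | p ∈ K ∧ ∃ vg ∈ subdiffE g p, ∃ vh ∈ subdiffE h p,
      ∀ q ∈ K, (∀ i, p.1 i = 0 → q.1 i = 0) → 0 ≤ dotE (vg - vh) (q - p)})
    (Lθ : ℝ → Set ((Fin n → ℝ) × (Fin m → ℝ)))
    (hLθ : ∀ θ, Lθ θ = {p | p ∈ K ∧ ∃ vg ∈ subdiffE g p, ∃ vh ∈ subdiffE h p,
      ∃ zbar : Fin n → ℝ,
        (∀ i, ∃ μ ∈ rSubdiff (φ θ) (ψ θ) (p.1 i), zbar i = lam * μ) ∧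
        ∀ q ∈ K, 0 ≤ dotE (vg - vh) (q - p) + ∑ i, zbar i * (q.1 i - p.1 i)})
    (S : Set ((Fin n → ℝ) × (Fin m → ℝ))) (hS : S.Finite)
    (hne : ∀ θ > (0 : ℝ), (Lθ θ ∩ S).Nonempty) :
    ∃ θ₀ ≥ (0 : ℝ), ∀ θ ≥ θ₀, Lθ θ ∩ S ⊆ L := by
  obtain rfl : Lθ = fun θ => penalizedCriticalPoints K g h lam (rSubdiff (φ θ) (ψ θ)) := funext hLθ
  exact hL ▸ (atTop_basis' 0).eventually_iff.1
    (stmt_10_general (fun _ => hA.tendsto_rSubdiff_smallSets) hS)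
end

section
/- Suppose K = Π_{i=1}^n [−l_i, l_i] × Y, where 0 ≤ l_i ≤ +∞ for each i and Y ⊆ ℝᵐ, and suppose κ > 0 satisfies |f(x,y) − f(x',y)| ≤ κ ‖x − x'‖₂ for all (x,y), (x',y) ∈ K with ‖x − x'‖₀ ≤ 1. Then for every θ > κ/λ, the ℓ0-problem and the capped-ℓ1 approximate problem with parameter θ are equivalent: (x*,y*) is an optimal solution of the ℓ0-problem if and only if it is an optimal solution of the capped-ℓ1 approximate problem. -/
open scoped ENNReal

/-! Setting to zero every nonzero coordinate with `θ * ‖x i‖ < 1` raises the objective by at most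
`κ * ‖x i‖` each and saves `lam * θ * ‖x i‖ > κ * ‖x i‖` in the capped penalty, and the two
penalties agree at the resulting point. So wherever the penalties differ, some feasible point has
an `ℓ0` value below the capped value. -/

theorem isMinOn_iff_of_le_of_le_or_exists_lt {α β : Type*} [Preorder β] {F G : α → β}
    {K : Set α} {p : α} (hp : p ∈ K) (hle : ∀ x ∈ K, G x ≤ F x)
    (hlt : ∀ x ∈ K, F x ≤ G x ∨ ∃ y ∈ K, F y < G x) :
    IsMinOn F K p ↔ IsMinOn G K p := by
  simp only [isMinOn_iff]
  constructor
  · intro hF x hx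
    rcases hlt x hx with hFG | ⟨y, hy, hyx⟩
    · exact (hle p hp).trans ((hF x hx).trans hFG)
    · exact (hle p hp).trans ((hF y hy).trans hyx.le)
  · intro hG x hx
    rcases hlt p hp with hFG | ⟨y, hy, hyp⟩
    · exact hFG.trans ((hG x hx).trans (hle x hx))
    · exact absurd ((hG y hy).trans (hle y hy)) hyp.not_ge

section Piecewise

variable {ι : Type*} [DecidableEq ι] {β : ι → Type*} {K : Set (∀ i, β i)} {x z : ∀ i, β i}

theorem piecewise_mem_of_update_mem (hK : ∀ x ∈ K, ∀ i, Function.update x i (z i) ∈ K)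
    (hx : x ∈ K) (s : Finset ι) : s.piecewise z x ∈ K := by
  induction s using Finset.induction_on with
  | empty => rwa [Finset.piecewise_empty]
  | insert i s _ ih =>
    rw [Finset.piecewise_insert]
    exact hK _ ih i

theorem apply_piecewise_le_add_sum {M : Type*} [AddCommMonoid M] [PartialOrder M]
    [IsOrderedAddMonoid M] {f : (∀ i, β i) → M} {c : ∀ i, β i → M}
    (hK : ∀ x ∈ K, ∀ i, Function.update x i (z i) ∈ K)
    (hf : ∀ x ∈ K, ∀ i, f (Function.update x i (z i)) ≤ f x + c i (x i))
    (hx : x ∈ K) (s : Finset ι) : f (s.piecewise z x) ≤ f x + ∑ i ∈ s, c i (x i) := by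
  induction s using Finset.induction_on with
  | empty => simp
  | insert i s hi ih =>
    calc f ((insert i s).piecewise z x)
        = f (Function.update (s.piecewise z x) i (z i)) := by rw [Finset.piecewise_insert]
      _ ≤ f (s.piecewise z x) + c i (s.piecewise z x i) :=
        hf _ (piecewise_mem_of_update_mem hK hx s) i
      _ = f (s.piecewise z x) + c i (x i) := by rw [Finset.piecewise_eq_of_notMem _ _ _ hi]
      _ ≤ f x + ∑ j ∈ s, c j (x j) + c i (x i) := by gcongr
      _ = f x + ∑ j ∈ insert i s, c j (x j) := by
        rw [Finset.sum_insert hi, add_assoc, add_comm (c i (x i))]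

end Piecewise

section CappedL1

variable {ι : Type*} [Fintype ι] {β : ι → Type*} [∀ i, NormedAddCommGroup (β i)]
  [∀ i, DecidableEq (β i)]

/-- The capped-`ℓ1` penalty `∑ i, min {1, θ ‖x i‖}`, for vectors whose blocks `x i` lie in
arbitrary normed groups (the scalar penalty when every block is real). -/
noncomputable def cappedL1 (θ : ℝ) (x : ∀ i, β i) : ℝ :=
  ∑ i, min 1 (θ * ‖x i‖)

/-- The nonzero coordinates below the cap: those on which the capped-`ℓ1` and `ℓ0` penalties
differ. -/
noncomputable def uncappedSupport (θ : ℝ) (x : ∀ i, β i) : Finset ι :=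
  {i | x i ≠ 0 ∧ θ * ‖x i‖ < 1}

theorem hammingNorm_eq_sum_ite (x : ∀ i, β i) :
    (hammingNorm x : ℝ) = ∑ i, if x i = 0 then 0 else 1 := by
  simp [hammingNorm, Finset.sum_ite]

theorem cappedL1_le_hammingNorm (θ : ℝ) (x : ∀ i, β i) : cappedL1 θ x ≤ hammingNorm x := by
  rw [hammingNorm_eq_sum_ite]
  refine Finset.sum_le_sum fun i _ => ?_
  split_ifs with hxi
  · simp [hxi]
  · exact min_le_left _ _

theorem sum_norm_uncappedSupport_pos {θ : ℝ} {x : ∀ i, β i}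
    (h : (uncappedSupport θ x).Nonempty) : 0 < ∑ i ∈ uncappedSupport θ x, ‖x i‖ :=
  Finset.sum_pos (fun _ hi => norm_pos_iff.2 (Finset.mem_filter.1 hi).2.1) h

theorem cappedL1_eq_hammingNorm_piecewise_add [DecidableEq ι] (θ : ℝ) (x : ∀ i, β i) :
    cappedL1 θ x = hammingNorm ((uncappedSupport θ x).piecewise 0 x)
      + θ * ∑ i ∈ uncappedSupport θ x, ‖x i‖ := by
  rw [hammingNorm_eq_sum_ite, Finset.mul_sum, ← Finset.sum_ite_mem_eq (uncappedSupport θ x),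
    ← Finset.sum_add_distrib]
  refine Finset.sum_congr rfl fun i _ => ?_
  by_cases hi : i ∈ uncappedSupport θ x
  · have hlt : θ * ‖x i‖ < 1 := (Finset.mem_filter.1 hi).2.2
    simp [hi, hlt.le]
  · by_cases hxi : x i = 0
    · simp [hi, hxi]
    · have hge : 1 ≤ θ * ‖x i‖ := by simpa [uncappedSupport, hxi] using hi
      simp [hi, hxi, hge]

theorem stmt_12_general [DecidableEq ι] {E : Type*} {f : (∀ i, β i) × E → ℝ}
    {K : Set ((∀ i, β i) × E)} {lam κ θ : ℝ} (hlam : 0 ≤ lam) (hθ : κ < lam * θ)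
    (hK : ∀ p ∈ K, ∀ i, (Function.update p.1 i 0, p.2) ∈ K)
    (hf : ∀ p ∈ K, ∀ i, f (Function.update p.1 i 0, p.2) ≤ f p + κ * ‖p.1 i‖)
    {p : (∀ i, β i) × E} (hp : p ∈ K) :
    IsMinOn (fun q => f q + lam * hammingNorm q.1) K p ↔
      IsMinOn (fun q => f q + lam * cappedL1 θ q.1) K p := by
  refine isMinOn_iff_of_le_of_le_or_exists_lt hp
    (fun q _ => by gcongr; exact cappedL1_le_hammingNorm θ q.1) ?_
  rintro ⟨x, y⟩ hx
  have hcapped := cappedL1_eq_hammingNorm_piecewise_add θ x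
  rcases (uncappedSupport θ x).eq_empty_or_nonempty with hs | hs
  · left
    rw [hs, Finset.piecewise_empty, Finset.sum_empty, mul_zero, add_zero] at hcapped
    rw [hcapped]
  · right
    set s := uncappedSupport θ x
    have hslice : ∀ x ∈ {x | (x, y) ∈ K}, ∀ i, Function.update x i 0 ∈ {x | (x, y) ∈ K} :=
      fun x hx => hK (x, y) hx
    refine ⟨(s.piecewise 0 x, y), piecewise_mem_of_update_mem hslice hx s, ?_⟩
    calc f (s.piecewise 0 x, y) + lam * hammingNorm (s.piecewise 0 x)
        ≤ f (x, y) + ∑ i ∈ s, κ * ‖x i‖ + lam * hammingNorm (s.piecewise 0 x) := by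
          gcongr
          exact apply_piecewise_le_add_sum (f := fun x => f (x, y)) (c := fun i a => κ * ‖a‖)
            hslice (fun x hx => hf (x, y) hx) hx s
      _ = f (x, y) + κ * ∑ i ∈ s, ‖x i‖ + lam * hammingNorm (s.piecewise 0 x) := by
          rw [Finset.mul_sum]
      _ < f (x, y) + lam * θ * ∑ i ∈ s, ‖x i‖ + lam * hammingNorm (s.piecewise 0 x) := by
          gcongr
          exact sum_norm_uncappedSupport_pos hs
      _ = f (x, y) + lam * cappedL1 θ x := by
          rw [hcapped]
          ring

end CappedL1

section Box

variable {ι : Type*} [DecidableEq ι]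

theorem ofReal_abs_update_zero_le {x : ι → ℝ} {l : ι → ℝ≥0∞}
    (hx : ∀ i, ENNReal.ofReal |x i| ≤ l i) (i j : ι) :
    ENNReal.ofReal |Function.update x i 0 j| ≤ l j := by
  rcases eq_or_ne j i with rfl | hj
  · simp
  · simpa [hj] using hx j

variable [Fintype ι]

theorem card_filter_update_ne_le_one {β : ι → Type*} [∀ i, DecidableEq (β i)] (x : ∀ i, β i)
    (i : ι) (a : β i) : (Finset.univ.filter fun j => Function.update x i a j ≠ x j).card ≤ 1 := by
  refine (Finset.card_le_card fun j hj => ?_).trans (Finset.card_singleton i).le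
  by_contra hji
  exact (Finset.mem_filter.1 hj).2
    (Function.update_of_ne (fun h => hji (Finset.mem_singleton.2 h)) a x)

theorem sqrt_sum_update_sub_sq (x : ι → ℝ) (i : ι) (a : ℝ) :
    √(∑ j, (Function.update x i a j - x j) ^ 2) = |a - x i| := by
  rw [Finset.sum_eq_single_of_mem i (Finset.mem_univ i) fun j _ hj => by simp [hj],
    Function.update_self, Real.sqrt_sq_eq_abs]

theorem apply_update_zero_le_add {E : Type*} {f : (ι → ℝ) × E → ℝ} {K : Set ((ι → ℝ) × E)} {κ : ℝ}
    (hlip : ∀ p q : (ι → ℝ) × E, p ∈ K → q ∈ K → p.2 = q.2 →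
      (Finset.univ.filter fun i => p.1 i ≠ q.1 i).card ≤ 1 →
      |f p - f q| ≤ κ * √(∑ i, (p.1 i - q.1 i) ^ 2))
    {p : (ι → ℝ) × E} (hp : p ∈ K) {i : ι} (hpi : (Function.update p.1 i 0, p.2) ∈ K) :
    f (Function.update p.1 i 0, p.2) ≤ f p + κ * ‖p.1 i‖ := by
  have hbound := hlip _ p hpi hp rfl (card_filter_update_ne_le_one p.1 i 0)
  rw [sqrt_sum_update_sub_sq, zero_sub, abs_neg] at hbound
  exact sub_le_iff_le_add'.1 (le_of_abs_le hbound)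

end Box

/-- Proposition on boxes: if `K = Π[-l_i,l_i] × Y` and `f` is
coordinatewise `κ`-Lipschitz in `x`, then for `θ > κ/λ` the ℓ0-problem and the
capped-ℓ1 approximate problem with parameter `θ` have the same optimal solutions. -/
theorem stmt_12 {n m : ℕ}
    (g h : (Fin n → ℝ) × (Fin m → ℝ) → ℝ)
    (hg : ConvexOn ℝ Set.univ g) (hh : ConvexOn ℝ Set.univ h)
    (f : (Fin n → ℝ) × (Fin m → ℝ) → ℝ) (hf : ∀ p, f p = g p - h p)
    (lam : ℝ) (hlam : 0 < lam)
    (l : Fin n → ℝ≥0∞) (Y : Set (Fin m → ℝ))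
    (K : Set ((Fin n → ℝ) × (Fin m → ℝ)))
    (hK : K = {p | (∀ i, ENNReal.ofReal |p.1 i| ≤ l i) ∧ p.2 ∈ Y})
    (κ : ℝ) (hκpos : 0 < κ)
    (hlip : ∀ p q : (Fin n → ℝ) × (Fin m → ℝ), p ∈ K → q ∈ K → p.2 = q.2 →
      (Finset.univ.filter fun i => p.1 i ≠ q.1 i).card ≤ 1 →
      |f p - f q| ≤ κ * Real.sqrt (∑ i, (p.1 i - q.1 i) ^ 2)) :
    ∀ θ : ℝ, κ / lam < θ → ∀ p ∈ K,
      ((∀ q ∈ K, f p + lam * zeroNorm p.1 ≤ f q + lam * zeroNorm q.1)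
        ↔
       (∀ q ∈ K, f p + lam * ∑ i, min 1 (θ * |p.1 i|)
          ≤ f q + lam * ∑ i, min 1 (θ * |q.1 i|))) := by
  have hzero : ∀ p ∈ K, ∀ i, (Function.update p.1 i 0, p.2) ∈ K := by
    subst hK
    exact fun p hp i => ⟨ofReal_abs_update_zero_le hp.1 i, hp.2⟩
  intro θ hθ p hp
  exact stmt_12_general hlam.le ((div_lt_iff₀' hlam).1 hθ) hzero
    (fun q hq i => apply_update_zero_le_add hlip hq (hzero q hq i)) hp
end

section
/- Let a > 1 and θ > 0, and set θ' = θ/a. Suppose the ℓ0-problem and the capped-ℓ1 approximate problem with parameter θ' have the same set of optimal solutions, and that for some common optimal solution (x*,y*) one has Σ_{i=1}^n r_cap,θ'(x*_i) = ‖x*‖₀. Then the SCAD approximate problem: minimize f(x,y) + λ Σ_{i=1}^n r_scad(x_i) over (x,y) ∈ K, where r_scad is the SCAD function with parameters a and θ, has the same set of optimal solutions as the ℓ0-problem. -/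
/-- The SCAD approximation function with parameters `a > 1` and `θ > 0`. -/
noncomputable def rscad (a θ t : ℝ) : ℝ :=
  if |t| ≤ 1 / θ then (2 * θ / (a + 1)) * |t|
  else if |t| < a / θ then (-(θ ^ 2) * t ^ 2 + 2 * a * θ * |t| - 1) / (a ^ 2 - 1)
  else 1

/-!
In the variable `u = θ|t|`, the SCAD function is `2u / (a + 1)` for `u ≤ 1` and
`1 - (a - u)² / (a² - 1)` for `1 < u < a`: it is concave and rises from `0` at `u = 0` to `1` at
`u = a`, so it lies above the chord `u / a`. It is therefore squeezed between the capped-`ℓ1`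
function with parameter `θ / a` and the indicator of `t ≠ 0`, and the SCAD objective lies between
the capped-`ℓ1` and the `ℓ0` objectives. When these two agree at a minimizer of the smaller one, all
three have the same minimum value and the sets of minimizers are nested: `ℓ0` inside SCAD inside
capped-`ℓ1`. Equality of the two extremes then forces equality throughout.
-/

section Minimizers

variable {α β : Type*} [Preorder β] {s : Set α} {F G L M U : α → β} {p₀ : α}

/-- The set of optimal solutions of the problem of minimizing `F` over `s`. -/
def minimizers (F : α → β) (s : Set α) : Set α :=
  {p | p ∈ s ∧ ∀ q ∈ s, F p ≤ F q}

lemma mem_minimizers_of_le (hFG : ∀ q ∈ s, F q ≤ G q) (hp₀ : p₀ ∈ minimizers F s)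
    (htouch : G p₀ ≤ F p₀) : p₀ ∈ minimizers G s :=
  ⟨hp₀.1, fun q hq => htouch.trans ((hp₀.2 q hq).trans (hFG q hq))⟩

lemma minimizers_subset_of_le (hFG : ∀ q ∈ s, F q ≤ G q) (hp₀ : p₀ ∈ minimizers F s)
    (htouch : G p₀ ≤ F p₀) : minimizers G s ⊆ minimizers F s := by
  rintro p ⟨hp, hpmin⟩
  refine ⟨hp, fun q hq => ?_⟩
  calc F p ≤ G p := hFG p hp
    _ ≤ G p₀ := hpmin p₀ hp₀.1
    _ ≤ F p₀ := htouch
    _ ≤ F q := hp₀.2 q hq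

lemma minimizers_eq_of_sandwich (hLM : ∀ q ∈ s, L q ≤ M q) (hMU : ∀ q ∈ s, M q ≤ U q)
    (hLU : minimizers L s ⊆ minimizers U s) (hp₀ : p₀ ∈ minimizers L s) (htouch : U p₀ ≤ L p₀) :
    minimizers M s = minimizers U s := by
  have hML₀ : M p₀ ≤ L p₀ := (hMU p₀ hp₀.1).trans htouch
  have hUM₀ : U p₀ ≤ M p₀ := htouch.trans (hLM p₀ hp₀.1)
  apply Set.Subset.antisymm
  · exact (minimizers_subset_of_le hLM hp₀ hML₀).trans hLU
  · exact minimizers_subset_of_le hMU (mem_minimizers_of_le hLM hp₀ hML₀) hUM₀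

end Minimizers

section Penalties

/-- The capped-`ℓ1` approximation function with parameter `θ`. -/
noncomputable def rcap (θ t : ℝ) : ℝ :=
  min 1 (θ * |t|)

lemma rcap_mono_left (t : ℝ) : Monotone fun θ => rcap θ t := fun _ _ hθ =>
  min_le_min_left 1 (mul_le_mul_of_nonneg_right hθ (abs_nonneg t))

variable {a θ θ' t : ℝ}

lemma rscad_of_mul_abs_le_one (hθ : 0 < θ) (ht : θ * |t| ≤ 1) :
    rscad a θ t = 2 * (θ * |t|) / (a + 1) := by
  rw [rscad, if_pos ((le_div_iff₀' hθ).2 ht)]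
  ring

lemma rscad_of_one_lt_of_lt (hθ : 0 < θ) (ht : 1 < θ * |t|) (hta : θ * |t| < a) :
    rscad a θ t = 1 - (a - θ * |t|) ^ 2 / (a ^ 2 - 1) := by
  have hden : a ^ 2 - 1 ≠ 0 := by nlinarith
  rw [rscad, if_neg ((div_lt_iff₀' hθ).2 ht).not_ge, if_pos ((lt_div_iff₀' hθ).2 hta),
    ← sq_abs t]
  field_simp
  ring

lemma rscad_of_le_mul_abs (ha : 1 < a) (hθ : 0 < θ) (hta : a ≤ θ * |t|) : rscad a θ t = 1 := by
  rw [rscad, if_neg ((div_lt_iff₀' hθ).2 (ha.trans_le hta)).not_ge,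
    if_neg ((div_le_iff₀' hθ).2 hta).not_gt]

lemma rscad_zero (hθ : 0 < θ) : rscad a θ 0 = 0 := by
  rw [rscad_of_mul_abs_le_one hθ (by simp)]
  simp

lemma rscad_le_one (ha : 1 < a) (hθ : 0 < θ) : rscad a θ t ≤ 1 := by
  rcases le_or_gt (θ * |t|) 1 with ht | ht
  · rw [rscad_of_mul_abs_le_one hθ ht, div_le_one (by linarith)]
    linarith
  rcases lt_or_ge (θ * |t|) a with hta | hta
  · have hden : 0 < a ^ 2 - 1 := by nlinarith
    rw [rscad_of_one_lt_of_lt hθ ht hta]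
    exact sub_le_self 1 (by positivity)
  · exact (rscad_of_le_mul_abs ha hθ hta).le

lemma rscad_le_ite (ha : 1 < a) (hθ : 0 < θ) : rscad a θ t ≤ if t ≠ 0 then 1 else 0 := by
  split_ifs with ht
  · exact rscad_le_one ha hθ
  · rw [not_not.1 ht, rscad_zero hθ]

lemma rcap_div_le_rscad (ha : 1 < a) (hθ : 0 < θ) : rcap (θ / a) t ≤ rscad a θ t := by
  have ha₀ : 0 < a := one_pos.trans ha
  have hlinear : rcap (θ / a) t ≤ θ * |t| / a :=
    (min_le_right _ _).trans_eq (div_mul_eq_mul_div θ a |t|)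
  rcases le_or_gt (θ * |t|) 1 with ht | ht
  · have hu : 0 ≤ θ * |t| := by positivity
    rw [rscad_of_mul_abs_le_one hθ ht]
    refine hlinear.trans ?_
    rw [div_le_div_iff₀ ha₀ (by linarith)]
    nlinarith
  rcases lt_or_ge (θ * |t|) a with hta | hta
  · have hden : 0 < a ^ 2 - 1 := by nlinarith
    have hgap : (a - θ * |t|) ^ 2 / (a ^ 2 - 1) ≤ (a - θ * |t|) / a := by
      have hratio : (a - θ * |t|) * a ≤ a ^ 2 - 1 := by nlinarith
      rw [div_le_div_iff₀ hden ha₀, sq, mul_assoc]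
      exact mul_le_mul_of_nonneg_left hratio (sub_nonneg.2 hta.le)
    rw [rscad_of_one_lt_of_lt hθ ht hta]
    rw [sub_div, div_self ha₀.ne'] at hgap
    linarith
  · rw [rscad_of_le_mul_abs ha hθ hta]
    exact min_le_left _ _

lemma rcap_le_rscad (ha : 1 < a) (hθ : 0 < θ) (hθ' : θ' ≤ θ / a) : rcap θ' t ≤ rscad a θ t :=
  (rcap_mono_left t hθ').trans (rcap_div_le_rscad ha hθ)

lemma zeroNorm_eq_sum {n : ℕ} (x : Fin n → ℝ) :
    zeroNorm x = ∑ i, if x i ≠ 0 then (1 : ℝ) else 0 := by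
  rw [zeroNorm, Finset.sum_boole]

lemma sum_rscad_le_zeroNorm {n : ℕ} (ha : 1 < a) (hθ : 0 < θ) (x : Fin n → ℝ) :
    ∑ i, rscad a θ (x i) ≤ zeroNorm x := by
  rw [zeroNorm_eq_sum]
  exact Finset.sum_le_sum fun i _ => rscad_le_ite ha hθ

end Penalties

theorem stmt_14_general {n : ℕ} {Y : Type*} {K : Set ((Fin n → ℝ) × Y)}
    {f : (Fin n → ℝ) × Y → ℝ} {lam a θ θ' : ℝ} (hlam : 0 ≤ lam) (ha : 1 < a) (hθ : 0 < θ)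
    (hθ' : θ' ≤ θ / a)
    (hsub : minimizers (fun p => f p + lam * ∑ i, rcap θ' (p.1 i)) K ⊆
      minimizers (fun p => f p + lam * zeroNorm p.1) K)
    (htouch : ∃ p₀ ∈ minimizers (fun p => f p + lam * ∑ i, rcap θ' (p.1 i)) K,
      ∑ i, rcap θ' (p₀.1 i) = zeroNorm p₀.1) :
    minimizers (fun p => f p + lam * ∑ i, rscad a θ (p.1 i)) K =
      minimizers (fun p => f p + lam * zeroNorm p.1) K := by
  obtain ⟨p₀, hp₀, heq⟩ := htouch
  refine minimizers_eq_of_sandwich (fun q _ => ?_) (fun q _ => ?_) hsub hp₀ (by rw [heq])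
  · gcongr
    exact rcap_le_rscad ha hθ hθ'
  · gcongr
    exact sum_rscad_le_zeroNorm ha hθ q.1

/-- if the ℓ0-problem and the capped-ℓ1 problem with parameter
`θ' = θ/a` are equivalent (with equal approximation value at some common solution),
then the SCAD approximate problem with parameters `a, θ` has the same set of optimal
solutions as the ℓ0-problem. -/
theorem stmt_14 {n m : ℕ}
    (K : Set ((Fin n → ℝ) × (Fin m → ℝ))) (hK : Convex ℝ K)
    (g h : (Fin n → ℝ) × (Fin m → ℝ) → ℝ)
    (hg : ConvexOn ℝ Set.univ g) (hh : ConvexOn ℝ Set.univ h)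
    (f : (Fin n → ℝ) × (Fin m → ℝ) → ℝ) (hf : ∀ p, f p = g p - h p)
    (lam : ℝ) (hlam : 0 < lam)
    (a θ : ℝ) (ha : 1 < a) (hθ : 0 < θ)
    (θ' : ℝ) (hθ' : θ' = θ / a)
    (hsame :
      {p | p ∈ K ∧ ∀ q ∈ K, f p + lam * zeroNorm p.1 ≤ f q + lam * zeroNorm q.1}
      = {p | p ∈ K ∧ ∀ q ∈ K, f p + lam * ∑ i, min 1 (θ' * |p.1 i|)
          ≤ f q + lam * ∑ i, min 1 (θ' * |q.1 i|)})
    (hcommon : ∃ pstar, (pstar ∈ K ∧ ∀ q ∈ K,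
        f pstar + lam * zeroNorm pstar.1 ≤ f q + lam * zeroNorm q.1) ∧
      (∑ i, min 1 (θ' * |pstar.1 i|)) = zeroNorm pstar.1) :
    {p | p ∈ K ∧ ∀ q ∈ K,
        f p + lam * ∑ i, rscad a θ (p.1 i) ≤ f q + lam * ∑ i, rscad a θ (q.1 i)}
      = {p | p ∈ K ∧ ∀ q ∈ K,
          f p + lam * zeroNorm p.1 ≤ f q + lam * zeroNorm q.1} := by
  obtain ⟨pstar, hpstar, heq⟩ := hcommon
  exact stmt_14_general hlam.le ha hθ hθ'.le hsame.ge ⟨pstar, hsame.le hpstar, heq⟩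
end
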